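/- Let m and p be positive integers and set l = 4mp+1, t = 4mp−2p+1, p' = 2mp. Let s and k be integers with 0 ≤ s ≤ 2m−1 and sp+1 ≤ k ≤ (s+1)p. Then i_k = 2m(p−k) + m + 1 + (s/2)(4mp+1) if s is even, and i_k = 2m(k−p) − m − ((s−1)/2)(4mp+1) if s is odd. -/

import Mathlib

open Finset

noncomputable section

/-- The q-Pochhammer symbol `(a; q)_n = ∏_{k=0}^{n-1} (1 - a q^k)`. -/
def qPoch (a q : ℂ) (n : ℕ) : ℂ := ∏ k ∈ Finset.range n, (1 - a * q ^ k)

/-- The Gaussian binomial coefficient `[n; k]_q` as a polynomial in `q` over `ℤ`,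
defined by the q-Pascal rule `[n; k] = [n-1; k-1] + q^k [n-1; k]`.  It is the
polynomial equal to `(q;q)_n / ((q;q)_{n-k} (q;q)_k)`. -/
def gaussPoly : ℕ → ℕ → Polynomial ℤ
  | _, 0 => 1
  | 0, _ + 1 => 0
  | n + 1, k + 1 => gaussPoly n k + Polynomial.X ^ (k + 1) * gaussPoly n (k + 1)

/-- The Gaussian binomial coefficient `[n; k]_q` evaluated at `q : ℂ`. -/
def gbin (q : ℂ) (n k : ℕ) : ℂ := Polynomial.aeval q (gaussPoly n k)

/-- `σ_j = (-1)^⌊(2j-1)t/l⌋`. -/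
def sigmaT (l t j : ℕ) : ℤ := (-1) ^ ((2 * j - 1) * t / l)

/-- `r(j)`: the unique integer with `r(j) ≡ (2j-1)t (mod 2l)` and `-l < r(j) < l`. -/
def rT (l t j : ℕ) : ℤ :=
  if (((2 * j - 1) * t % (2 * l) : ℕ) : ℤ) < (l : ℤ) then (((2 * j - 1) * t % (2 * l) : ℕ) : ℤ)
  else (((2 * j - 1) * t % (2 * l) : ℕ) : ℤ) - 2 * (l : ℤ)

/-- `r'(j) = (|r(j)| + 1)/2`. -/
def rpT (l t j : ℕ) : ℕ := ((rT l t j).natAbs + 1) / 2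

open Classical in
/-- `i_k`: the unique `j ∈ {1, …, (l-1)/2}` with `r'(j) = k`. -/
def iT (l t k : ℕ) : ℕ :=
  if h : ∃ j, j ∈ Finset.Icc 1 ((l - 1) / 2) ∧ rpT l t j = k then h.choose else 0

/-- `ε_{i,j,m}`: `1` if `j ≡ -i, -i-1 (mod 2m)`, `-1` if `j ≡ i, i-1 (mod 2m)`,
`0` otherwise (and `0` when `m ∣ i`, a case excluded in all uses). -/
def epsLO (m i j : ℕ) : ℤ :=
  if m ∣ i then 0
  else if 2 * m ∣ (i + j) ∨ 2 * m ∣ (i + j + 1) then 1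
  else if (2 * (m : ℤ)) ∣ ((j : ℤ) - (i : ℤ)) ∨ (2 * (m : ℤ)) ∣ ((j : ℤ) - (i : ℤ) + 1) then -1
  else 0

/-- `Δ_{i,j,m}`: `1` if `j ≡ -i, -i+1 (mod 2m)`, `-1` if `j ≡ i, i+1 (mod 2m)`,
`0` otherwise (and `0` when `m ∣ i`, a case excluded in all uses). -/
def deltaLO (m i j : ℕ) : ℤ :=
  if m ∣ i then 0
  else if 2 * m ∣ (i + j) ∨ 2 * m ∣ (i + j - 1) then 1
  else if (2 * (m : ℤ)) ∣ ((j : ℤ) - (i : ℤ)) ∨ (2 * (m : ℤ)) ∣ ((j : ℤ) - (i : ℤ) - 1) then -1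
  else 0

/-- `γ_{i,m} = 1` if `i ≡ 1, …, m-1 (mod 2m)` and `-1` otherwise. -/
def gamLO (m i : ℕ) : ℤ :=
  if 1 ≤ i % (2 * m) ∧ i % (2 * m) ≤ m - 1 then 1 else -1

/-- `β_{i,m} = 1` if `i ≡ 1, …, m-1 (mod 2m)`, `-1` if `i ≡ m+1, …, 2m-1 (mod 2m)`,
and `0` if `m ∣ i`. -/
def betLO (m i : ℕ) : ℤ :=
  if 1 ≤ i % (2 * m) ∧ i % (2 * m) ≤ m - 1 then 1
  else if m + 1 ≤ i % (2 * m) ∧ i % (2 * m) ≤ 2 * m - 1 then -1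
  else 0

/-- Extend a tuple `f : Fin P → Fin N` to `n : ℕ → ℕ` with `n i = f (i-1)` for
`1 ≤ i ≤ P` and `n i = 0` otherwise (in particular `n 0 = 0`). -/
def extTup (P N : ℕ) (f : Fin P → Fin N) : ℕ → ℕ :=
  fun i => if h : 1 ≤ i ∧ i ≤ P then (f ⟨i - 1, by omega⟩ : ℕ) else 0

/-- Takata's exponent `a(n)` (an integer; every integer division below is exact). -/
def aT (l t : ℕ) (n : ℕ → ℕ) : ℤ :=
  -(∑ j ∈ Icc 1 ((l - 1) / 2), (∑ k ∈ Icc (rpT l t j) ((l - 1) / 2),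
      (sigmaT l t (iT l t k) + sigmaT l t (iT l t ((l - 1) / 2 + 1 - k))) / 2) *
      ((n j : ℤ) - (n (j - 1) : ℤ)))
  - ∑ j ∈ Icc 1 ((l - 1) / 2 - 1), ((sigmaT l t (j + 1) + sigmaT l t ((l - 1) / 2 + 1 - j)) / 2) * (n j : ℤ)
  - ((sigmaT l t ((l - 1) / 2) + 1) / 2) * (n ((l - 1) / 2) : ℤ)
  - ∑ j ∈ Icc 1 ((l - 1) / 2), sigmaT l t j

/-- Takata's exponent `b₁(n)` (an integer; every integer division below is exact
whenever the factor it multiplies is nonzero). -/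
def b1T (l t : ℕ) (n : ℕ → ℕ) : ℤ :=
  -aT l t n
  + ∑ k ∈ Icc 1 ((l - t) / 2), ((1 - sigmaT l t (iT l t k)) / 2) * (n (iT l t k - 1) : ℤ)
  - ∑ k ∈ Icc ((l - t) / 2 + 1) ((l - 1) / 2), (n (iT l t k - 1) : ℤ)
  + ∑ k ∈ Icc ((l - t) / 2 + 1) ((l - 1) / 2), ((1 + sigmaT l t (iT l t k)) / 2) * (n (iT l t k) : ℤ)
  - (1 + sigmaT l t ((l - 1) / 2)) * (n ((l - 1) / 2) : ℤ)
  + ∑ j ∈ Icc 1 ((l - 1) / 2 - 1), ((sigmaT l t (j + 1) - sigmaT l t j) / 2) * (n j : ℤ)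
  - ∑ k ∈ Icc 1 ((l - 1) / 2 - 1), ∑ k' ∈ Icc (k + 1) ((l - 1) / 2),
      ((1 + Int.sign ((iT l t k : ℤ) - (iT l t k' : ℤ))) / 2) *
        ((sigmaT l t (iT l t k) - sigmaT l t (iT l t k')) / 2) *
        ((n (iT l t k) : ℤ) - (n (iT l t k - 1) : ℤ)) *
        ((n (iT l t k') : ℤ) - (n (iT l t k' - 1) : ℤ))
  + ∑ j ∈ Icc 1 ((l - 1) / 2), sigmaT l t j *
      (∑ k ∈ Icc 1 (rpT l t j), ((n (iT l t k) : ℤ) - (n (iT l t k - 1) : ℤ))) * (n (j - 1) : ℤ)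

/-- Takata's exponent `b₂(n)`. -/
def b2T (l t : ℕ) (n : ℕ → ℕ) : ℤ :=
  if l < 2 * t then
    ∑ k ∈ Icc ((l - t) / 2 + 1) ((t - 1) / 2),
      ((1 + sigmaT l t (iT l t k)) / 2) * (n (iT l t k - 1) : ℤ)
  else
    -∑ k ∈ Icc ((t + 1) / 2 + 1) ((l - t) / 2),
      ((1 + sigmaT l t (iT l t k)) / 2) * (n (iT l t k - 1) : ℤ)

/-- Takata's `κ(p')`. -/
def kapT (l t N : ℕ) (n : ℕ → ℕ) : ℤ :=
  if sigmaT l t ((l - 1) / 2) = -1 then -(N : ℤ) * (n ((l - 1) / 2) : ℤ) else 0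

/-- Takata's `τ(j)`. -/
def tauT (l t : ℕ) (q : ℂ) (n : ℕ → ℕ) (j : ℕ) : ℂ :=
  if sigmaT l t j = -1 then (-1 : ℂ) ^ (n j - n (j - 1))
  else q ^ ((((n j : ℤ) - (n (j - 1) : ℤ)) * (((n j : ℤ) - (n (j - 1) : ℤ)) + 1)) / 2)

/-- Takata's `X(n)`. -/
def XT (l t N : ℕ) (q : ℂ) (n : ℕ → ℕ) : ℂ :=
  (-1 : ℂ) ^ (n ((l - 1) / 2)) * q ^ kapT l t N n *
    (qPoch q q (N - 1) * qPoch q q (n ((l - 1) / 2)) / qPoch q q (N - n ((l - 1) / 2) - 1)) *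
    ∏ j ∈ Icc 1 ((l - 1) / 2), tauT l t q n j / qPoch q q (n j - n (j - 1))

/-!
Put `l = 4mp + 1` and `t = l - 2p`. The congruence `(2J - 1) t ≡ -(2k - 1)` modulo `2l` holds for
`J = m + 1` and `k = p`, because `(2m + 1) t = 2ml - (2p - 1)`. Since `4m * t = 2 + 2l * (2m - 1)`,
it is preserved when `k` is lowered by one and `J` is raised by `2m`, and also when `l` is added to
`J`; hence `J = 2m(p - k) + m + 1 + a l` solves it for every `a`. The reflection `J ↦ 1 - J` negates
`2J - 1`, so `1 - J` solves the congruence with the opposite sign. On the block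
`sp < k ≤ (s + 1)p`, the choice `a = ⌊s / 2⌋` puts `J` (for even `s`) or `1 - J` (for odd `s`) into
`{1, …, (l - 1) / 2}`, where coprimality of `l` and `t` leaves only one index with `r'(j) = k`.
-/

section Residue

variable {l t i j k : ℕ}

theorem rT_eq_bmod (hj : 1 ≤ j) : rT l t j = ((2 * (j : ℤ) - 1) * t).bmod (2 * l) := by
  have hcast : (((2 * j - 1) * t : ℕ) : ℤ) = (2 * (j : ℤ) - 1) * t := by
    push_cast [Nat.cast_sub (show 1 ≤ 2 * j by omega)]
    ring
  have hhalf : (((2 * l : ℕ) : ℤ) + 1) / 2 = l := by omega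
  rw [Int.bmod, hhalf, ← hcast, rT]
  norm_cast

theorem rT_modEq (hj : 1 ≤ j) : rT l t j ≡ (2 * j - 1) * t [ZMOD 2 * l] := by
  rw [rT_eq_bmod hj]
  exact_mod_cast Int.bmod_emod

theorem rT_eq_of_modEq {r : ℤ} (hj : 1 ≤ j) (hr₁ : -(l : ℤ) ≤ r) (hr₂ : r < l)
    (h : (2 * (j : ℤ) - 1) * t ≡ r [ZMOD 2 * l]) : rT l t j = r := by
  rw [rT_eq_bmod hj, Int.bmod_eq_iff (by omega)]
  exact ⟨by omega, by omega, by exact_mod_cast h.dvd⟩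

theorem rT_emod_two (hj : 1 ≤ j) : rT l t j % 2 = t % 2 := by
  have hr : rT l t j ≡ (2 * j - 1) * t [ZMOD 2] := (rT_modEq hj).of_mul_right _
  have ht : (2 * (j : ℤ) - 1) * t ≡ t [ZMOD 2] :=
    Int.modEq_iff_dvd.mpr ⟨(1 - j) * t, by ring⟩
  exact hr.trans ht

theorem rT_eq_or_eq_neg_of_rpT_eq (hi : 1 ≤ i) (hj : 1 ≤ j) (h : rpT l t i = rpT l t j) :
    rT l t i = rT l t j ∨ rT l t i = -rT l t j := by
  have hi_parity := rT_emod_two (l := l) (t := t) hi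
  have hj_parity := rT_emod_two (l := l) (t := t) hj
  simp only [rpT] at h
  omega

theorem rpT_injOn (hlt : l.Coprime t) : Set.InjOn (rpT l t) (Set.Icc 1 (l / 2)) := by
  rintro i ⟨hi, hil⟩ j ⟨hj, hjl⟩ hij
  have cancel {x : ℤ} (hx : 2 * x * t ≡ 0 [ZMOD 2 * l]) (hxl : |x| < l) : x = 0 := by
    rw [Int.modEq_zero_iff_dvd, mul_assoc, mul_dvd_mul_iff_left two_ne_zero] at hx
    exact Int.eq_zero_of_abs_lt_dvd
      (IsCoprime.dvd_of_dvd_mul_right (Nat.isCoprime_iff_coprime.mpr hlt) hx) hxl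
  have hri := rT_modEq (l := l) (t := t) hi
  have hrj := rT_modEq (l := l) (t := t) hj
  rcases rT_eq_or_eq_neg_of_rpT_eq hi hj hij with h | h
  · have hsub : (i : ℤ) - j = 0 := by
      refine cancel ?_ (by rw [abs_lt]; omega)
      convert hri.symm.sub hrj.symm using 1
      · ring
      · rw [h, sub_self]
    omega
  · have hadd : (i : ℤ) + j - 1 = 0 := by
      refine cancel ?_ (by rw [abs_lt]; omega)
      convert hri.symm.add hrj.symm using 1
      · ring
      · rw [h, neg_add_cancel]
    omega

theorem rpT_eq_of_modEq (hj : 1 ≤ j) (hk : 1 ≤ k) (hkl : 2 * k ≤ l)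
    (h : (2 * (j : ℤ) - 1) * t ≡ 2 * k - 1 [ZMOD 2 * l] ∨
      (2 * (j : ℤ) - 1) * t ≡ -(2 * k - 1) [ZMOD 2 * l]) : rpT l t j = k := by
  rcases h with h | h <;> rw [rpT, rT_eq_of_modEq hj (by omega) (by omega) h] <;> omega

theorem iT_eq_of_rpT_eq (hlt : l.Coprime t) (hj : j ∈ Icc 1 ((l - 1) / 2))
    (h : rpT l t j = k) : iT l t k = j := by
  have hex : ∃ j, j ∈ Icc 1 ((l - 1) / 2) ∧ rpT l t j = k := ⟨j, hj, h⟩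
  obtain ⟨hmem, hval⟩ := hex.choose_spec
  have hsub : Icc 1 ((l - 1) / 2) ⊆ Icc 1 (l / 2) := Icc_subset_Icc_right (by omega)
  rw [iT, dif_pos hex]
  exact rpT_injOn hlt (mem_Icc.mp (hsub hmem)) (mem_Icc.mp (hsub hj)) (hval.trans h.symm)

theorem iT_eq_of_modEq {J : ℤ} (hlt : l.Coprime t) (hk : 1 ≤ k) (hkl : 2 * k ≤ l)
    (hJ : 1 ≤ J) (hJl : 2 * J < l)
    (h : (2 * J - 1) * t ≡ 2 * k - 1 [ZMOD 2 * l] ∨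
      (2 * J - 1) * t ≡ -(2 * k - 1) [ZMOD 2 * l]) : (iT l t k : ℤ) = J := by
  lift J to ℕ using by omega
  rw [iT_eq_of_rpT_eq hlt (mem_Icc.mpr ⟨by omega, by omega⟩)
    (rpT_eq_of_modEq (by omega) hk hkl h)]

end Residue

section Block

/-- The solution `J = 2m(p - k) + m + 1 + a(4mp + 1)` of `(2J - 1) t ≡ -(2k - 1)` modulo `2l`,
where `l = 4mp + 1` and `t = 4mp - 2p + 1`. It is `i_k` on the block with `s = 2a`, and its
reflection `1 - J` is `i_k` on the block with `s = 2a + 1`. -/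
def blockIndex (m p k a : ℤ) : ℤ := 2 * m * (p - k) + m + 1 + a * (4 * m * p + 1)

theorem blockIndex_modEq (m p k a : ℤ) :
    (2 * blockIndex m p k a - 1) * (4 * m * p - 2 * p + 1) ≡ -(2 * k - 1)
      [ZMOD 2 * (4 * m * p + 1)] := by
  refine (Int.modEq_iff_dvd.mpr
    ⟨m * (2 * (p - k) + 1) + a * (4 * m * p - 2 * p + 1) - (p - k), ?_⟩).symm
  rw [blockIndex]
  ring

theorem one_sub_blockIndex_modEq (m p k a : ℤ) :
    (2 * (1 - blockIndex m p k a) - 1) * (4 * m * p - 2 * p + 1) ≡ 2 * k - 1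
      [ZMOD 2 * (4 * m * p + 1)] := by
  convert (blockIndex_modEq m p k a).neg using 1 <;> ring

theorem blockIndex_two_mul_mul_add (m p d a : ℤ) :
    blockIndex m p (2 * a * p + d) a = 2 * m * (p - d) + m + 1 + a := by
  rw [blockIndex]
  ring

theorem blockIndex_mem_Icc {m p k a : ℤ} (ha : 0 ≤ a) (ham : a < m)
    (hk₁ : 2 * a * p + 1 ≤ k) (hk₂ : k ≤ (2 * a + 1) * p) :
    blockIndex m p k a ∈ Set.Icc 1 (2 * m * p) := by
  obtain ⟨d, rfl⟩ : ∃ d, k = 2 * a * p + d := ⟨k - 2 * a * p, by ring⟩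
  have hlow : 0 ≤ m * (p - d) := mul_nonneg (by omega) (by linarith)
  have hupp : 0 ≤ m * (d - 1) := mul_nonneg (by omega) (by linarith)
  rw [blockIndex_two_mul_mul_add]
  constructor <;> linarith

theorem one_sub_blockIndex_mem_Icc {m p k a : ℤ} (ha : 0 ≤ a) (ham : a < m)
    (hk₁ : (2 * a + 1) * p + 1 ≤ k) (hk₂ : k ≤ (2 * a + 2) * p) :
    1 - blockIndex m p k a ∈ Set.Icc 1 (2 * m * p) := by
  obtain ⟨d, rfl⟩ : ∃ d, k = 2 * a * p + d := ⟨k - 2 * a * p, by ring⟩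
  have hlow : 0 ≤ m * (d - p - 1) := mul_nonneg (by omega) (by linarith)
  have hupp : 0 ≤ m * (2 * p - d) := mul_nonneg (by omega) (by linarith)
  rw [blockIndex_two_mul_mul_add]
  constructor <;> linarith

variable {m p t k a : ℕ}

theorem coprime_of_add_two_mul_eq (ht : t + 2 * p = 4 * m * p + 1) :
    (4 * m * p + 1).Coprime t := by
  refine Nat.isCoprime_iff_coprime.mp ⟨1 - 2 * m, 2 * m, ?_⟩
  zify at ht
  push_cast
  linear_combination 2 * (m : ℤ) * ht

theorem iT_eq_of_mem_Icc_of_modEq {J : ℤ} (ht : t + 2 * p = 4 * m * p + 1)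
    (hk : 1 ≤ k) (hkl : k ≤ 2 * m * p) (hJ : J ∈ Set.Icc 1 (2 * m * p : ℤ))
    (h : (2 * J - 1) * (4 * m * p - 2 * p + 1) ≡ 2 * k - 1 [ZMOD 2 * (4 * m * p + 1)] ∨
      (2 * J - 1) * (4 * m * p - 2 * p + 1) ≡ -(2 * k - 1) [ZMOD 2 * (4 * m * p + 1)]) :
    (iT (4 * m * p + 1) t k : ℤ) = J := by
  have htZ : (4 * m * p - 2 * p + 1 : ℤ) = t := by zify at ht; linarith
  rw [htZ] at h
  exact iT_eq_of_modEq (coprime_of_add_two_mul_eq ht) hk (by linarith) hJ.1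
    (by push_cast; linarith [hJ.2]) (by exact_mod_cast h)

theorem iT_eq_blockIndex (ht : t + 2 * p = 4 * m * p + 1) (ham : a < m)
    (hk₁ : 2 * a * p + 1 ≤ k) (hk₂ : k ≤ (2 * a + 1) * p) :
    (iT (4 * m * p + 1) t k : ℤ) = blockIndex m p k a := by
  have hkl : k ≤ 2 * m * p := hk₂.trans (Nat.mul_le_mul_right p (by omega))
  refine iT_eq_of_mem_Icc_of_modEq ht (by omega) hkl ?_ (.inr (blockIndex_modEq m p k a))
  exact blockIndex_mem_Icc (by positivity) (by exact_mod_cast ham)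
    (by exact_mod_cast hk₁) (by exact_mod_cast hk₂)

theorem iT_eq_one_sub_blockIndex (ht : t + 2 * p = 4 * m * p + 1) (ham : a < m)
    (hk₁ : (2 * a + 1) * p + 1 ≤ k) (hk₂ : k ≤ (2 * a + 2) * p) :
    (iT (4 * m * p + 1) t k : ℤ) = 1 - blockIndex m p k a := by
  have hkl : k ≤ 2 * m * p := hk₂.trans (Nat.mul_le_mul_right p (by omega))
  refine iT_eq_of_mem_Icc_of_modEq ht (by omega) hkl ?_ (.inl (one_sub_blockIndex_modEq m p k a))
  exact one_sub_blockIndex_mem_Icc (by positivity) (by exact_mod_cast ham)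
    (by exact_mod_cast hk₁) (by exact_mod_cast hk₂)

end Block

/-- Lemma 2.4(ii): for `l = 4mp+1`, `t = 4mp-2p+1`, the explicit value of `i_k`
on the interval `sp+1 ≤ k ≤ (s+1)p`. -/
theorem iT_formula_neg_pos
    (m p s k : ℕ) (hm : 0 < m) (hp : 0 < p)
    (hs : s ≤ 2 * m - 1) (hk1 : s * p + 1 ≤ k) (hk2 : k ≤ (s + 1) * p) :
    (iT (4 * m * p + 1) (4 * m * p - 2 * p + 1) k : ℤ)
      = if s % 2 = 0 then
          2 * (m : ℤ) * ((p : ℤ) - (k : ℤ)) + (m : ℤ) + 1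
            + ((s / 2 : ℕ) : ℤ) * (4 * (m : ℤ) * (p : ℤ) + 1)
        else
          2 * (m : ℤ) * ((k : ℤ) - (p : ℤ)) - (m : ℤ)
            - (((s - 1) / 2 : ℕ) : ℤ) * (4 * (m : ℤ) * (p : ℤ) + 1) := by
  have ht : 4 * m * p - 2 * p + 1 + 2 * p = 4 * m * p + 1 := by
    have : 2 * p ≤ 4 * m * p := Nat.mul_le_mul_right p (by omega)
    omega
  rcases Nat.even_or_odd' s with ⟨a, rfl | rfl⟩
  · rw [if_pos (by omega), Nat.mul_div_cancel_left a two_pos,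
      iT_eq_blockIndex ht (by omega) hk1 hk2, blockIndex]
  · rw [if_neg (by omega), Nat.add_sub_cancel, Nat.mul_div_cancel_left a two_pos,
      iT_eq_one_sub_blockIndex ht (by omega) hk1 hk2, blockIndex]
    ring

end
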